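/- arXiv:2209.00418 — 2 statements merged into one kernel-verified Lean document; each statement's English description precedes it below -/
import Mathlib

section
/- Let [P,Q] be a linear interval of height k ≥ 2 in the Dyck lattice Dyck_n. Then there exist (possibly empty) words A and B such that either P = A d^k u B and Q = A u d^k B, or P = A d u^k B and Q = A u^k d B. -/
/-!
Common definitions.  A letter of a word is a `Bool`: `true` is an up step `u`,
`false` is a down step `d`.  Positions in words are 0-based.
-/

/-- A (possibly empty) Dyck word: as many `u`'s as `d`'s, and every
prefix has at least as many `u`'s as `d`'s. -/
def IsDyckPath (w : List Bool) : Prop :=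
  w.count true = w.count false ∧ ∀ p, p <+: w → p.count false ≤ p.count true

/-- A Dyck word of size `n`: `n` up steps, `n` down steps, every prefix has
at least as many `u`'s as `d`'s. -/
def IsDyckWord (n : ℕ) (w : List Bool) : Prop :=
  w.count true = n ∧ w.count false = n ∧ ∀ p, p <+: w → p.count false ≤ p.count true

/-- The set of Dyck words of size `n`. -/
def DyckSet (n : ℕ) : Set (List Bool) := {w | IsDyckWord n w}

/-- An increment function: a `{0,1}`-valued function (the paper's `δ : {1,…,n} → {0,1}`;
only the values on `{1,…,n}` are ever used). -/
def IsIncFun (δ : ℕ → ℤ) : Prop := ∀ i, δ i = 0 ∨ δ i = 1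

/-- The 0-based position in `w` of the `i`-th up step `u_i` (`i` is 1-based). -/
def upPos (w : List Bool) (i : ℕ) : ℕ :=
  ((List.range w.length).filter fun q => w.getD q false = true).getD (i - 1) 0

/-- `h_i(w)`: the (1-based, between 1 and 2n) position of the up step `u_i` in `w`. -/
def hpos (w : List Bool) (i : ℕ) : ℕ := upPos w i + 1

/-- The change of δ-altitude produced by the letter at position `q` of `w`:
the up step `u_i` contributes `δ i`, a down step contributes `-1`. -/
def stepVal (δ : ℕ → ℤ) (w : List Bool) (q : ℕ) : ℤ :=
  if w.getD q false = true then δ ((w.take (q + 1)).count true) else -1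

/-- The δ-elevation of the factor of `w` occupying positions `a, …, b-1`. -/
def elev (δ : ℕ → ℤ) (w : List Bool) (a b : ℕ) : ℤ :=
  ∑ q ∈ Finset.Ico a b, stepVal δ w q

/-- `C` is the δ-excursion of the up step of `w` at position `p`:
the smallest (nonempty) factor of `w` starting at `p` whose δ-elevation is `0`. -/
def IsDeltaExcAt (δ : ℕ → ℤ) (w : List Bool) (p : ℕ) (C : List Bool) : Prop :=
  w.getD p false = true ∧
  ∃ m, 0 < m ∧ p + m ≤ w.length ∧ C = (w.drop p).take m ∧
    elev δ w p (p + m) = 0 ∧ ∀ m', 0 < m' → m' < m → elev δ w p (p + m') ≠ 0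

/-- `C` is the excursion of the up step of `w` at position `p`: the smallest factor
of `w` starting at `p` that is itself a Dyck word. -/
def IsExcursionAt (w : List Bool) (p : ℕ) (C : List Bool) : Prop :=
  w.getD p false = true ∧
  ∃ m, 0 < m ∧ p + m ≤ w.length ∧ C = (w.drop p).take m ∧ IsDyckPath C ∧
    ∀ m', 0 < m' → m' < m → ¬ IsDyckPath ((w.drop p).take m')

/-- `ℓ_i(w; δ)`: the length of the δ-excursion of `u_i` in `w`. -/
noncomputable def excLen (δ : ℕ → ℤ) (w : List Bool) (i : ℕ) : ℕ :=
  sInf {m | 0 < m ∧ elev δ w (upPos w i) (upPos w i + m) = 0}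

/-- `Q` is the δ-rotation of `P` at some up step: `P = A d C B` with `d u_i` a valley
and `C` the δ-excursion of `u_i`, and `Q = A C d B`. -/
def DeltaRot (δ : ℕ → ℤ) (P Q : List Bool) : Prop :=
  ∃ A C B, P = A ++ false :: (C ++ B) ∧ Q = A ++ (C ++ false :: B) ∧
    IsDeltaExcAt δ P (A.length + 1) C

/-- The alt-Tamari order `Tam^δ`: reflexive transitive closure of δ-rotations. -/
def altLE (δ : ℕ → ℤ) : List Bool → List Bool → Prop :=
  Relation.ReflTransGen (DeltaRot δ)

/-- The Tamari order: the alt-Tamari order for `δ ≡ 1` (the δ-excursion of any up step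
is then its excursion). -/
def tamLE : List Bool → List Bool → Prop := altLE fun _ => 1

/-- The height (number of `u`'s minus number of `d`'s) of the length-`j` prefix of `w`. -/
def prefHeight (w : List Bool) (j : ℕ) : ℤ :=
  ((w.take j).count true : ℤ) - ((w.take j).count false : ℤ)

/-- The Dyck (inclusion) order: every prefix height of `P` is at most that of `Q`. -/
def dyckLE (P Q : List Bool) : Prop := ∀ j, prefHeight P j ≤ prefHeight Q j

/-- Strict version of a relation `le`. -/
def ltOf (le : List Bool → List Bool → Prop) (P Q : List Bool) : Prop :=
  le P Q ∧ ¬ le Q P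

/-- There is a strict chain `P = c 0 < c 1 < ⋯ < c k = Q` inside `S`. -/
def HasChainIn (S : Set (List Bool)) (le : List Bool → List Bool → Prop)
    (P Q : List Bool) (k : ℕ) : Prop :=
  ∃ c : ℕ → List Bool, c 0 = P ∧ c k = Q ∧ (∀ i ≤ k, c i ∈ S) ∧
    ∀ i < k, ltOf le (c i) (c (i + 1))

/-- The interval `[P,Q]` of the poset `(S, le)` has height `k`: `k` is the maximal
length of a chain from `P` to `Q`. -/
def IntervalHeight (S : Set (List Bool)) (le : List Bool → List Bool → Prop)
    (P Q : List Bool) (k : ℕ) : Prop :=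
  HasChainIn S le P Q k ∧ ∀ m, HasChainIn S le P Q m → m ≤ k

/-- The interval `[P,Q]` of the poset `(S, le)` is linear: it is totally ordered. -/
def LinearInterval (S : Set (List Bool)) (le : List Bool → List Bool → Prop)
    (P Q : List Bool) : Prop :=
  P ∈ S ∧ Q ∈ S ∧ le P Q ∧
  ∀ R R', R ∈ S → R' ∈ S → le P R → le R Q → le P R' → le R' Q → le R R' ∨ le R' R

/-- `Q` covers `P` in the poset `(S, le)`. -/
def CovIn (S : Set (List Bool)) (le : List Bool → List Bool → Prop)
    (P Q : List Bool) : Prop :=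
  P ∈ S ∧ Q ∈ S ∧ ltOf le P Q ∧ ∀ R ∈ S, ¬ (ltOf le P R ∧ ltOf le R Q)

/-- The number of valleys (factors `du`) of `w`. -/
def valleys (w : List Bool) : ℕ :=
  ((List.range w.length).filter fun q => !w.getD q true && w.getD (q + 1) false).length

open List

section PrefixHeights

@[simp]
lemma prefHeight_zero (w : List Bool) : prefHeight w 0 = 0 := by simp [prefHeight]

@[simp]
lemma prefHeight_nil (j : ℕ) : prefHeight [] j = 0 := by simp [prefHeight]

@[simp]
lemma prefHeight_true_cons (w : List Bool) (j : ℕ) :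
    prefHeight (true :: w) (j + 1) = 1 + prefHeight w j := by
  simp [prefHeight]; ring

@[simp]
lemma prefHeight_false_cons (w : List Bool) (j : ℕ) :
    prefHeight (false :: w) (j + 1) = -1 + prefHeight w j := by
  simp [prefHeight]; ring

lemma neg_le_prefHeight (w : List Bool) (j : ℕ) : -(j : ℤ) ≤ prefHeight w j := by
  have h : (w.take j).count false ≤ j := count_le_length.trans (length_take_le j w)
  simp only [prefHeight]
  omega

lemma prefHeight_eq_two_mul_sub (w : List Bool) (j : ℕ) :
    prefHeight w j = 2 * ((w.take j).count true : ℤ) - min j w.length := by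
  have h := (w.take j).count_true_add_count_false
  rw [length_take] at h
  simp only [prefHeight]
  omega

lemma prefHeight_replicate_false_append (a : ℕ) (w : List Bool) (j : ℕ) :
    prefHeight (replicate a false ++ w) j =
      if j ≤ a then -(j : ℤ) else -(a : ℤ) + prefHeight w (j - a) := by
  induction a generalizing j with
  | zero => cases j <;> simp
  | succ a ih =>
    cases j with
    | zero => simp
    | succ j =>
      rw [replicate_succ, cons_append, prefHeight_false_cons, ih]
      simp only [Nat.add_le_add_iff_right, Nat.add_sub_add_right]
      split_ifs <;> push_cast <;> ring

end PrefixHeights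

section InclusionOrder

lemma dyckLE_refl (P : List Bool) : dyckLE P P := fun _ => le_rfl

lemma dyckLE_trans {P Q R : List Bool} (h : dyckLE P Q) (h' : dyckLE Q R) : dyckLE P R :=
  fun j => (h j).trans (h' j)

@[simp]
lemma dyckLE_cons_iff (b : Bool) (P Q : List Bool) :
    dyckLE (b :: P) (b :: Q) ↔ dyckLE P Q := by
  constructor
  · intro h j
    have := h (j + 1)
    cases b <;> simpa using this
  · intro h j
    cases j with
    | zero => simp
    | succ j => cases b <;> simpa using h j

@[simp]
lemma dyckLE_append_left_iff (A P Q : List Bool) :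
    dyckLE (A ++ P) (A ++ Q) ↔ dyckLE P Q := by
  induction A with
  | nil => simp
  | cons b A ih => simp [ih]

@[simp]
lemma not_dyckLE_true_false (P Q : List Bool) : ¬ dyckLE (true :: P) (false :: Q) := by
  intro h
  have := h 1
  rw [← Nat.zero_add 1] at this
  simp at this

lemma dyckLE_swap (P Q : List Bool) (h : dyckLE P Q) :
    dyckLE (false :: true :: P) (true :: false :: Q)
  | 0 => by simp
  | 1 => by
    rw [← Nat.zero_add 1]
    simp
  | j + 2 => by
    have := h j
    simp
    linarith

@[simp]
lemma dyckLE_swap_iff (P Q : List Bool) :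
    dyckLE (false :: true :: P) (true :: false :: Q) ↔ dyckLE P Q := by
  refine ⟨fun h j => ?_, dyckLE_swap P Q⟩
  have := h (j + 2)
  simp at this
  linarith

lemma dyckLE_antisymm {P Q : List Bool} (hl : P.length = Q.length)
    (h : dyckLE P Q) (hge : dyckLE Q P) : P = Q := by
  induction P generalizing Q with
  | nil => simpa using hl.symm
  | cons a P ih =>
    cases Q with
    | nil => simp at hl
    | cons b Q =>
      have hl' : P.length = Q.length := by simpa using hl
      cases a <;> cases b
      · rw [ih hl' (by simpa using h) (by simpa using hge)]
      · exact absurd hge (not_dyckLE_true_false _ _)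
      · exact absurd h (not_dyckLE_true_false _ _)
      · rw [ih hl' (by simpa using h) (by simpa using hge)]

/-- Raising the first valley of a word that starts below `Q` keeps it below `Q`. -/
lemma dyckLE_raise_first_valley {a : ℕ} {P Q : List Bool}
    (h : dyckLE (replicate (a + 1) false ++ true :: P) (true :: Q)) :
    dyckLE (replicate a false ++ true :: false :: P) (true :: Q) := by
  intro j
  have hj := h j
  rw [prefHeight_replicate_false_append] at hj ⊢
  obtain hja | rfl | ⟨i, rfl⟩ : j ≤ a ∨ j = a + 1 ∨ ∃ i, j = a + 1 + (i + 1) := by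
    rcases le_or_gt j a with h1 | h1
    · exact Or.inl h1
    · rcases Nat.lt_or_ge j (a + 2) with h2 | h2
      · exact Or.inr (Or.inl (by omega))
      · exact Or.inr (Or.inr ⟨j - (a + 2), by omega⟩)
  · rw [if_pos (by omega)] at hj
    rwa [if_pos hja]
  · rw [if_neg (by omega), Nat.add_sub_cancel_left, ← Nat.zero_add 1]
    have := neg_le_prefHeight Q a
    simp
    linarith
  · rw [if_neg (by omega), Nat.add_sub_cancel_left] at hj
    rw [if_neg (by omega), show a + 1 + (i + 1) - a = i + 1 + 1 by omega]
    simp at hj ⊢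
    linarith

end InclusionOrder

section LinearIntervals

/-- `[P, Q]` is a linear interval among the words with prescribed numbers of letters. -/
structure WordLinear (P Q : List Bool) : Prop where
  length_eq : P.length = Q.length
  count_eq : P.count true = Q.count true
  le : dyckLE P Q
  total : ∀ R S : List Bool, R.length = P.length → S.length = P.length →
    dyckLE P R → dyckLE R Q → dyckLE P S → dyckLE S Q → dyckLE R S ∨ dyckLE S R

/-- `P = A d^k u B` and `Q = A u d^k B`. -/
def IsLeftInterval (k : ℕ) (P Q : List Bool) : Prop :=
  ∃ A B : List Bool, P = A ++ (replicate k false ++ true :: B) ∧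
    Q = A ++ (true :: (replicate k false ++ B))

/-- `P = A d u^k B` and `Q = A u^k d B`. -/
def IsRightInterval (k : ℕ) (P Q : List Bool) : Prop :=
  ∃ A B : List Bool, P = A ++ (false :: (replicate k true ++ B)) ∧
    Q = A ++ (replicate k true ++ false :: B)

/-- Either kind of interval, of positive height. -/
def IsSideInterval (P Q : List Bool) : Prop :=
  ∃ k, 1 ≤ k ∧ (IsLeftInterval k P Q ∨ IsRightInterval k P Q)

lemma IsSideInterval.cons (b : Bool) {P Q : List Bool} (h : IsSideInterval P Q) :
    IsSideInterval (b :: P) (b :: Q) := by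
  obtain ⟨k, hk, ⟨A, B, rfl, rfl⟩ | ⟨A, B, rfl, rfl⟩⟩ := h
  · exact ⟨k, hk, Or.inl ⟨b :: A, B, rfl, rfl⟩⟩
  · exact ⟨k, hk, Or.inr ⟨b :: A, B, rfl, rfl⟩⟩

/-- A left or right interval whose words differ at the first letter has empty `A`. -/
lemma IsSideInterval.of_head_ne {P Q : List Bool}
    (h : IsSideInterval (false :: P) (true :: Q)) :
    ∃ k B, (P = replicate k false ++ true :: B ∧ Q = replicate (k + 1) false ++ B) ∨
      (P = replicate (k + 1) true ++ B ∧ Q = replicate k true ++ false :: B) := by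
  obtain ⟨k, hk, ⟨A, B, hP, hQ⟩ | ⟨A, B, hP, hQ⟩⟩ := h <;>
  obtain ⟨k, rfl⟩ := Nat.exists_eq_add_of_le' hk <;>
  refine ⟨k, B, ?_⟩ <;> rcases A with _ | ⟨a, A⟩
  · left; simpa [replicate_succ] using And.intro hP hQ
  · simp at hP hQ; simp [hP.1] at hQ
  · right; simpa [replicate_succ] using And.intro hP hQ
  · simp at hP hQ; simp [hP.1] at hQ

lemma WordLinear.of_cons {b : Bool} {P Q : List Bool} (h : WordLinear (b :: P) (b :: Q)) :
    WordLinear P Q where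
  length_eq := by simpa using h.length_eq
  count_eq := by simpa [count_cons] using h.count_eq
  le := by simpa using h.le
  total R R' hR hR' h1 h2 h3 h4 := by
    simpa using h.total (b :: R) (b :: R') (by simpa using hR) (by simpa using hR')
      (by simpa using h1) (by simpa using h2) (by simpa using h3) (by simpa using h4)

lemma WordLinear.of_le {P R Q : List Bool} (h : WordLinear P Q) (hl : R.length = P.length)
    (hc : R.count true = P.count true) (h1 : dyckLE P R) (h2 : dyckLE R Q) :
    WordLinear R Q where
  length_eq := hl.trans h.length_eq
  count_eq := hc.trans h.count_eq
  le := h2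
  total S S' hS hS' h3 h4 h5 h6 := h.total S S' (hS.trans hl) (hS'.trans hl)
    (dyckLE_trans h1 h3) h4 (dyckLE_trans h1 h5) h6

/-- Raising the first valley preserves linearity. -/
lemma WordLinear.raise_first_valley {a : ℕ} {P Q : List Bool}
    (h : WordLinear (replicate (a + 1) false ++ true :: P) (true :: Q)) :
    WordLinear (replicate a false ++ true :: false :: P) (true :: Q) := by
  refine h.of_le (by simp; omega) (by simp [count_append, count_replicate]) ?_
    (dyckLE_raise_first_valley h.le)
  rw [replicate_succ', append_assoc, dyckLE_append_left_iff]
  exact dyckLE_swap _ _ (dyckLE_refl P)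

/-- Two changes separated by a common point make the interval non-linear. -/
lemma WordLinear.eq_of_swap {P Q : List Bool}
    (h : WordLinear (false :: true :: P) (true :: false :: Q)) : P = Q := by
  have hle : dyckLE P Q := by simpa using h.le
  have hl : P.length = Q.length := by simpa using h.length_eq
  have := h.total (true :: false :: P) (false :: true :: Q) (by simp) (by simp [hl])
    (dyckLE_swap _ _ (dyckLE_refl P)) (by simpa) (by simpa) (dyckLE_swap _ _ (dyckLE_refl Q))
  simp only [not_dyckLE_true_false, dyckLE_swap_iff, false_or] at this
  exact dyckLE_antisymm hl hle this

/-- An interval containing a cell together with both a row and a column step is not linear. -/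
lemma not_wordLinear_hook (k : ℕ) (B : List Bool) :
    ¬ WordLinear (false :: true :: (replicate (k + 1) false ++ true :: B))
      (true :: true :: (replicate (k + 2) false ++ B)) := by
  intro h
  have hswap : dyckLE (replicate (k + 1) false ++ true :: B)
      (replicate k false ++ true :: false :: B) := by
    rw [replicate_succ', append_assoc, dyckLE_append_left_iff]
    exact dyckLE_swap _ _ (dyckLE_refl B)
  have hraise : dyckLE (replicate (k + 2) false ++ true :: B)
      (true :: (replicate (k + 2) false ++ B)) := by
    have := (dyckLE_cons_iff true _ _).1 (dyckLE_raise_first_valley (a := 0) h.le)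
    simpa [replicate_succ] using this
  have hR' : dyckLE (false :: true :: (replicate k false ++ true :: false :: B))
      (true :: true :: (replicate (k + 2) false ++ B)) := by
    have h1 := dyckLE_raise_first_valley hraise
    have h2 := dyckLE_swap _ _ (dyckLE_refl (replicate k false ++ true :: false :: B))
    refine dyckLE_trans h2 ((dyckLE_cons_iff true _ _).2 ?_)
    simpa [replicate_succ] using h1
  rcases h.total (true :: (replicate (k + 2) false ++ true :: B))
    (false :: true :: (replicate k false ++ true :: false :: B))
    (by simp; omega) (by simp; omega) (dyckLE_swap _ _ (dyckLE_refl _))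
    ((dyckLE_cons_iff true _ _).2 hraise) (by simpa using hswap) hR' with h1 | h1
  · simp at h1
  · have h2 : dyckLE (replicate k false ++ true :: false :: B)
        (replicate (k + 1) false ++ true :: B) := by
      simpa [replicate_succ] using h1
    rw [replicate_succ', append_assoc, dyckLE_append_left_iff] at h2
    simp at h2

lemma replicate_false_append_true_inj {a k : ℕ} {P Q : List Bool}
    (h : replicate a false ++ true :: P = replicate k false ++ true :: Q) : a = k ∧ P = Q := by
  induction a generalizing k with
  | zero => cases k <;> simp_all [replicate_succ]
  | succ a ih =>
    cases k with
    | zero => simp [replicate_succ] at h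
    | succ k => simpa using ih (by simpa [replicate_succ] using h)

/-- A nontrivial linear interval of words is a left or a right interval. -/
theorem WordLinear.eq_or_isSideInterval {P Q : List Bool} (h : WordLinear P Q) :
    P = Q ∨ IsSideInterval P Q := by
  induction hN : P.length generalizing P Q with
  | zero =>
    have hl := h.length_eq
    rw [hN] at hl
    rw [length_eq_zero_iff.1 hN, length_eq_zero_iff.1 hl.symm]
    exact Or.inl rfl
  | succ N ih =>
    -- the words differ at the first letter and `P` starts with `a + 1` down steps
    have key : ∀ (a : ℕ) (P Q : List Bool),
        (replicate (a + 1) false ++ true :: P).length = N + 1 →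
        WordLinear (replicate (a + 1) false ++ true :: P) (true :: Q) →
        IsSideInterval (replicate (a + 1) false ++ true :: P) (true :: Q) := by
      intro a
      induction a with
      | zero =>
        intro P Q hlen h
        have hraise := h.raise_first_valley.of_cons
        change IsSideInterval (false :: true :: P) (true :: Q)
        rcases Q with _ | ⟨_ | _, Q⟩
        · simpa using h.length_eq
        · obtain rfl := WordLinear.eq_of_swap h
          exact ⟨1, le_rfl, Or.inl ⟨[], P, rfl, rfl⟩⟩
        · rcases ih hraise (by simpa using hlen) with heq | hside
          · simp at heq
          · obtain ⟨k, B, ⟨rfl, rfl⟩ | ⟨rfl, rfl⟩⟩ := hside.of_head_ne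
            · cases k with
              | zero => exact ⟨2, by norm_num, Or.inr ⟨[], B, rfl, rfl⟩⟩
              | succ k => exact absurd h (not_wordLinear_hook k B)
            · exact ⟨k + 2, by omega, Or.inr ⟨[], B, rfl, rfl⟩⟩
      | succ a iha =>
        intro P Q hlen h
        have hside := iha (false :: P) Q (by simp at hlen ⊢; omega) h.raise_first_valley
        obtain ⟨k, B, ⟨hP, rfl⟩ | ⟨hP, rfl⟩⟩ := hside.of_head_ne
        · obtain ⟨rfl, rfl⟩ := replicate_false_append_true_inj hP
          exact ⟨a + 2, by omega, Or.inl ⟨[], P, rfl, by simp [replicate_succ']⟩⟩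
        · rcases a with _ | a
          · rcases k with _ | k
            · obtain rfl : false :: P = B := by simpa using hP
              exact ⟨2, by norm_num, Or.inl ⟨[], P, rfl, rfl⟩⟩
            · simp [replicate_succ] at hP
          · simp [replicate_succ] at hP
    rcases P with _ | ⟨p, P⟩
    · simp at hN
    rcases Q with _ | ⟨q, Q⟩
    · simpa using h.length_eq
    by_cases hpq : p = q
    · subst hpq
      rcases ih h.of_cons (by simpa using hN) with rfl | hs
      · exact Or.inl rfl
      · exact Or.inr (hs.cons p)
    · right
      obtain ⟨rfl, rfl⟩ : p = false ∧ q = true := by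
        have := h.le
        cases p <;> cases q <;> simp_all
      obtain ⟨a, P', hP⟩ : ∃ a P', P = replicate a false ++ true :: P' := by
        have hmem : true ∈ P := by
          have := h.count_eq
          rw [← count_pos_iff]
          simp at this
          omega
        clear * - hmem
        induction P with
        | nil => simp at hmem
        | cons b P ihP =>
          cases b
          · obtain ⟨a, P', rfl⟩ := ihP (by simpa using hmem)
            exact ⟨a + 1, P', rfl⟩
          · exact ⟨0, P, rfl⟩
      subst hP
      exact key a P' Q hN h

end LinearIntervals

section Heights

/-- The area statistic: the sum over the up steps of the length of the remaining suffix,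
the up step included. -/
def upArea : List Bool → ℕ
  | [] => 0
  | b :: w => (if b then w.length + 1 else 0) + upArea w

lemma upArea_eq_sum (w : List Bool) :
    upArea w = ∑ j ∈ Finset.range (w.length + 1), (w.take j).count true := by
  induction w with
  | nil => simp [upArea]
  | cons b w ih =>
    rw [length_cons, Finset.sum_range_succ']
    cases b <;> simp [upArea, ih, Finset.sum_add_distrib, add_comm]

lemma upArea_lt_of_ltOf {P Q : List Bool} (hl : P.length = Q.length)
    (h : ltOf dyckLE P Q) : upArea P < upArea Q := by
  have hcount : ∀ j, (P.take j).count true ≤ (Q.take j).count true := by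
    intro j
    have := h.1 j
    rw [prefHeight_eq_two_mul_sub, prefHeight_eq_two_mul_sub, hl] at this
    omega
  obtain ⟨j, hj⟩ := not_forall.1 h.2
  rw [not_le, prefHeight_eq_two_mul_sub, prefHeight_eq_two_mul_sub, hl] at hj
  rw [upArea_eq_sum, upArea_eq_sum, hl]
  refine Finset.sum_lt_sum (fun i _ => hcount i) ⟨min j Q.length, by simp, ?_⟩
  rcases le_total j Q.length with hle | hle
  · rw [min_eq_left hle]
    omega
  · rw [take_of_length_le (hl ▸ hle), take_of_length_le hle] at hj
    rw [min_eq_right hle, take_of_length_le hl.le, take_length]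
    omega

lemma IsDyckWord.length_eq {n : ℕ} {w : List Bool} (h : IsDyckWord n w) :
    w.length = 2 * n := by
  have := w.count_true_add_count_false
  rw [h.1, h.2.1] at this
  omega

lemma add_le_upArea_of_hasChainIn {n k : ℕ} {P Q : List Bool}
    (h : HasChainIn (DyckSet n) dyckLE P Q k) : upArea P + k ≤ upArea Q := by
  obtain ⟨c, rfl, rfl, hS, hlt⟩ := h
  suffices H : ∀ i ≤ k, upArea (c 0) + i ≤ upArea (c i) from H k le_rfl
  intro i hi
  induction i with
  | zero => simp
  | succ i ih =>
    have h1 := ih (by omega)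
    have h2 := upArea_lt_of_ltOf ((hS i (by omega)).length_eq.trans
      (hS (i + 1) hi).length_eq.symm) (hlt i (by omega))
    omega

lemma upArea_append_left {A P Q : List Bool} {m : ℕ} (hl : P.length = Q.length)
    (h : upArea Q = upArea P + m) : upArea (A ++ Q) = upArea (A ++ P) + m := by
  induction A with
  | nil => simpa
  | cons b A ih => simp [upArea, ih, hl]; omega

lemma upArea_replicate_false_append (k : ℕ) (w : List Bool) :
    upArea (replicate k false ++ w) = upArea w := by
  induction k with
  | zero => simp
  | succ k ih => simp [replicate_succ, upArea, ih]

lemma upArea_replicate_true_append_false (k : ℕ) (w : List Bool) :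
    upArea (replicate k true ++ false :: w) = upArea (replicate k true ++ w) + k := by
  induction k with
  | zero => simp [upArea]
  | succ k ih => simp [replicate_succ, upArea, ih]; omega

lemma IsLeftInterval.upArea_eq {k : ℕ} {P Q : List Bool} (h : IsLeftInterval k P Q) :
    upArea Q = upArea P + k := by
  obtain ⟨A, B, rfl, rfl⟩ := h
  apply upArea_append_left
  · simp; omega
  · simp [upArea, upArea_replicate_false_append]; omega

lemma IsRightInterval.upArea_eq {k : ℕ} {P Q : List Bool} (h : IsRightInterval k P Q) :
    upArea Q = upArea P + k := by
  obtain ⟨A, B, rfl, rfl⟩ := h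
  apply upArea_append_left
  · simp; omega
  · simp [upArea, upArea_replicate_true_append_false]

lemma IsDyckWord.of_dyckLE {n : ℕ} {P R : List Bool} (hP : IsDyckWord n P)
    (hl : R.length = P.length) (hc : R.count true = P.count true) (h : dyckLE P R) :
    IsDyckWord n R := by
  have h1 := R.count_true_add_count_false
  have h2 := P.count_true_add_count_false
  refine ⟨hc.trans hP.1, ?_, fun p hp => ?_⟩
  · have := hP.2.1
    omega
  · rw [prefix_iff_eq_take.1 hp]
    have h3 := hP.2.2 _ (take_prefix p.length P)
    have h4 := h p.length
    simp only [prefHeight] at h4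
    omega

lemma ltOf_swap (X Y : List Bool) :
    ltOf dyckLE (X ++ false :: true :: Y) (X ++ true :: false :: Y) := by
  simp [ltOf, dyckLE_refl]

/-- A sequence of words in which each one raises a valley of the previous one is a chain. -/
lemma hasChainIn_of_swaps {n k : ℕ} (c : ℕ → List Bool) (h0 : IsDyckWord n (c 0))
    (h : ∀ i < k, ∃ X Y, c i = X ++ false :: true :: Y ∧ c (i + 1) = X ++ true :: false :: Y) :
    HasChainIn (DyckSet n) dyckLE (c 0) (c k) k := by
  refine ⟨c, rfl, rfl, fun i hi => ?_, fun i hi => ?_⟩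
  · induction i with
    | zero => exact h0
    | succ i ih =>
      obtain ⟨X, Y, h1, h2⟩ := h i hi
      have hw : IsDyckWord n (c i) := ih (by omega)
      rw [h1] at hw
      rw [h2]
      exact hw.of_dyckLE (by simp) (by simp [count_append]) (ltOf_swap X Y).1
  · obtain ⟨X, Y, h1, h2⟩ := h i hi
    rw [h1, h2]
    exact ltOf_swap X Y

lemma IsLeftInterval.hasChainIn {n k : ℕ} {P Q : List Bool} (h : IsLeftInterval k P Q)
    (hP : IsDyckWord n P) : HasChainIn (DyckSet n) dyckLE P Q k := by
  obtain ⟨A, B, rfl, rfl⟩ := h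
  have := hasChainIn_of_swaps (n := n) (k := k)
    (fun i => A ++ (replicate (k - i) false ++ true :: (replicate i false ++ B)))
    (by simpa using hP) fun i hi =>
      ⟨A ++ replicate (k - (i + 1)) false, replicate i false ++ B, by
        simp [show k - i = k - (i + 1) + 1 by omega, replicate_succ'], by
        simp [replicate_succ]⟩
  simpa using this

lemma IsRightInterval.hasChainIn {n k : ℕ} {P Q : List Bool} (h : IsRightInterval k P Q)
    (hP : IsDyckWord n P) : HasChainIn (DyckSet n) dyckLE P Q k := by
  obtain ⟨A, B, rfl, rfl⟩ := h
  have := hasChainIn_of_swaps (n := n) (k := k)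
    (fun i => A ++ (replicate i true ++ false :: (replicate (k - i) true ++ B)))
    (by simpa using hP) fun i hi =>
      ⟨A ++ replicate i true, replicate (k - (i + 1)) true ++ B, by
        simp [show k - i = k - (i + 1) + 1 by omega, replicate_succ], by
        simp [replicate_succ']⟩
  simpa using this

end Heights

lemma LinearInterval.wordLinear {n : ℕ} {P Q : List Bool}
    (h : LinearInterval (DyckSet n) dyckLE P Q) : WordLinear P Q := by
  obtain ⟨hP, hQ, hle, htot⟩ := h
  have hPl : P.length = 2 * n := IsDyckWord.length_eq hP
  have hQl : Q.length = 2 * n := IsDyckWord.length_eq hQ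
  have hmem : ∀ R : List Bool, R.length = P.length → dyckLE P R → dyckLE R Q →
      R ∈ DyckSet n := by
    intro R hR h1 h2
    refine IsDyckWord.of_dyckLE hP hR ?_ h1
    have h3 := h1 (2 * n)
    have h4 := h2 (2 * n)
    rw [prefHeight_eq_two_mul_sub, prefHeight_eq_two_mul_sub] at h3 h4
    rw [take_of_length_le (by omega), take_of_length_le (by omega)] at h3 h4
    have h5 := hP.1
    have h6 := hQ.1
    omega
  exact ⟨hPl.trans hQl.symm, hP.1.trans hQ.1.symm, hle, fun R R' hR hR' h1 h2 h3 h4 =>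
    htot R R' (hmem R hR h1 h2) (hmem R' hR' h3 h4) h1 h2 h3 h4⟩

/-- every linear interval of height `k ≥ 2` in the Dyck lattice is a left
or a right interval. -/
theorem stmt4 (n k : ℕ) (hk : 2 ≤ k) (P Q : List Bool)
    (hlin : LinearInterval (DyckSet n) dyckLE P Q)
    (hht : IntervalHeight (DyckSet n) dyckLE P Q k) :
    (∃ A B : List Bool,
        P = A ++ (List.replicate k false ++ true :: B) ∧
        Q = A ++ (true :: (List.replicate k false ++ B))) ∨
    (∃ A B : List Bool,
        P = A ++ (false :: (List.replicate k true ++ B)) ∧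
        Q = A ++ (List.replicate k true ++ false :: B)) := by
  have hP : IsDyckWord n P := hlin.1
  have harea := add_le_upArea_of_hasChainIn hht.1
  rcases hlin.wordLinear.eq_or_isSideInterval with rfl | ⟨m, -, hL | hR⟩
  · omega
  · have h1 := hht.2 m (hL.hasChainIn hP)
    have h2 := hL.upArea_eq
    obtain rfl : m = k := by omega
    exact Or.inl hL
  · have h1 := hht.2 m (hR.hasChainIn hP)
    have h2 := hR.upArea_eq
    obtain rfl : m = k := by omega
    exact Or.inr hR
end

section
/- Let δ be an increment function of size n, P a Dyck word of size n, and let C_i, C_j be the δ-excursions in P of distinct up steps u_i and u_j. Then, as factors of P, either C_i and C_j are disjoint or one is contained in the other; moreover, C_i and C_j do not end at the same position of P. -/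
theorem length_filter_range_getD (w : List Bool) :
    ((List.range w.length).filter fun q => w.getD q false = true).length = w.count true := by
  induction w with
  | nil => simp
  | cons a w ih =>
    rw [List.length_cons, List.range_succ_eq_map, List.filter_cons, List.filter_map]
    cases a <;> simpa [Function.comp_def] using ih

theorem upPos_injOn {w : List Bool} {i j : ℕ} (hi1 : 1 ≤ i) (hi : i ≤ w.count true)
    (hj1 : 1 ≤ j) (hj : j ≤ w.count true) (h : upPos w i = upPos w j) : i = j := by
  rw [← length_filter_range_getD] at hi hj
  unfold upPos at h
  rw [List.getD_eq_getElem _ _ (by omega), List.getD_eq_getElem _ _ (by omega)] at h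
  have := (List.Nodup.getElem_inj_iff (List.nodup_range.filter _)).1 h
  omega

theorem neg_one_le_stepVal {δ : ℕ → ℤ} (hδ : IsIncFun δ) (w : List Bool) (q : ℕ) :
    -1 ≤ stepVal δ w q := by
  unfold stepVal
  split_ifs
  · rcases hδ ((w.take (q + 1)).count true) with h | h <;> omega
  · exact le_rfl

theorem elev_succ (δ : ℕ → ℤ) (w : List Bool) {a b : ℕ} (h : a ≤ b) :
    elev δ w a (b + 1) = elev δ w a b + stepVal δ w b :=
  Finset.sum_Ico_succ_top h _

theorem elev_add (δ : ℕ → ℤ) (w : List Bool) {a b c : ℕ} (hab : a ≤ b) (hbc : b ≤ c) :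
    elev δ w a b + elev δ w b c = elev δ w a c :=
  Finset.sum_Ico_consecutive _ hab hbc

/-- The elevation from an up step cannot become negative without vanishing first. -/
theorem exists_elev_eq_zero {δ : ℕ → ℤ} (hδ : IsIncFun δ) {w : List Bool} {p b : ℕ}
    (hp : w.getD p false = true) (hpb : p < b) (hb : elev δ w p b < 0) :
    ∃ c, p < c ∧ c < b ∧ elev δ w p c = 0 := by
  induction b, hpb using Nat.le_induction with
  | base =>
    rw [elev_succ δ w le_rfl, elev, Finset.Ico_self, Finset.sum_empty, stepVal, if_pos hp] at hb
    rcases hδ ((w.take (p + 1)).count true) with h | h <;> omega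
  | succ b hpb ih =>
    rw [Nat.succ_le_iff] at hpb
    rw [elev_succ δ w hpb.le] at hb
    have hstep := neg_one_le_stepVal hδ w b
    rcases lt_or_ge (elev δ w p b) 0 with h | h
    · obtain ⟨c, hpc, hcb, hc⟩ := ih h
      exact ⟨c, hpc, by omega, hc⟩
    · exact ⟨b, hpb, by omega, by omega⟩

theorem IsDeltaExcAt.elev_eq_zero {δ : ℕ → ℤ} {w : List Bool} {p : ℕ} {C : List Bool}
    (hC : IsDeltaExcAt δ w p C) : elev δ w p (p + C.length) = 0 := by
  obtain ⟨-, m, -, hm, rfl, h, -⟩ := hC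
  rwa [List.length_take, List.length_drop, min_eq_left (by omega)]

theorem IsDeltaExcAt.elev_ne_zero {δ : ℕ → ℤ} {w : List Bool} {p c : ℕ} {C : List Bool}
    (hC : IsDeltaExcAt δ w p C) (hpc : p < c) (hc : c < p + C.length) : elev δ w p c ≠ 0 := by
  obtain ⟨-, m, -, hm, rfl, -, h⟩ := hC
  rw [List.length_take, List.length_drop, min_eq_left (by omega)] at hc
  have := h (c - p) (by omega) (by omega)
  rwa [Nat.add_sub_cancel' hpc.le] at this

/-- A δ-excursion starting strictly inside another one ends strictly before it. -/
theorem IsDeltaExcAt.end_lt_end {δ : ℕ → ℤ} (hδ : IsIncFun δ) {w : List Bool} {p q : ℕ}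
    {C D : List Bool} (hC : IsDeltaExcAt δ w p C) (hD : IsDeltaExcAt δ w q D)
    (hpq : p < q) (hq : q < p + C.length) : q + D.length < p + C.length := by
  have hpos : 0 < elev δ w p q := by
    refine lt_of_le_of_ne (not_lt.1 fun hneg => ?_) (hC.elev_ne_zero hpq hq).symm
    obtain ⟨c, hpc, hcq, hc⟩ := exists_elev_eq_zero hδ hC.1 hpq hneg
    exact hC.elev_ne_zero hpc (hcq.trans hq) hc
  have hadd := elev_add δ w hpq.le hq.le
  rw [hC.elev_eq_zero] at hadd
  obtain ⟨c, hqc, hcC, hc⟩ := exists_elev_eq_zero hδ hD.1 hq (by omega)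
  by_contra hlt
  exact hD.elev_ne_zero hqc (by omega) hc

theorem IsDeltaExcAt.length_pos {δ : ℕ → ℤ} {w : List Bool} {p : ℕ} {C : List Bool}
    (hC : IsDeltaExcAt δ w p C) : 0 < C.length := by
  obtain ⟨-, m, hpos, hm, rfl, -, -⟩ := hC
  rwa [List.length_take, List.length_drop, min_eq_left (by omega)]

/-- two δ-excursions of distinct up steps, seen as factors, are disjoint
or one contains the other, and they do not end at the same position. -/
theorem stmt7 (n : ℕ) (δ : ℕ → ℤ) (hδ : IsIncFun δ) (P : List Bool)
    (hP : IsDyckWord n P) (i j : ℕ) (hi1 : 1 ≤ i) (hin : i ≤ n)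
    (hj1 : 1 ≤ j) (hjn : j ≤ n) (hij : i ≠ j) (Ci Cj : List Bool)
    (hCi : IsDeltaExcAt δ P (upPos P i) Ci)
    (hCj : IsDeltaExcAt δ P (upPos P j) Cj) :
    ((upPos P i + Ci.length ≤ upPos P j ∨ upPos P j + Cj.length ≤ upPos P i) ∨
      (upPos P i ≤ upPos P j ∧ upPos P j + Cj.length ≤ upPos P i + Ci.length) ∨
      (upPos P j ≤ upPos P i ∧ upPos P i + Ci.length ≤ upPos P j + Cj.length)) ∧
    upPos P i + Ci.length ≠ upPos P j + Cj.length := by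
  have hne : upPos P i ≠ upPos P j := fun h =>
    hij (upPos_injOn hi1 (hin.trans_eq hP.1.symm) hj1 (hjn.trans_eq hP.1.symm) h)
  have hi := hCi.end_lt_end hδ hCj
  have hj := hCj.end_lt_end hδ hCi
  have hli := hCi.length_pos
  have hlj := hCj.length_pos
  omega
end
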